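/- (Theorem 5.1, auxiliary kernel K₂.) With the matrix triplet data as in the context, fix x ∈ ℝ, assume Γ(x) is invertible, and let K̄₂(x, z) := −C·e^{iAx}·Γ(x)^{−1}·e^{iAz}·B. Then for every y > x the auxiliary Marchenko relation K₂(x, y) = −i·∫_x^∞ K̄₂(x, z)·Ω̄'(z + y) dz holds with the explicit value K₂(x, y) = C·e^{iAx}·Γ(x)^{−1}·e^{iAx}·M·Ā·e^{−iĀ(x+y)}·B̄; that is, −i·∫_x^∞ K̄₂(x, z)·Ω̄'(z + y) dz = C·e^{iAx}·Γ(x)^{−1}·e^{iAx}·M·Ā·e^{−iĀ(x+y)}·B̄. -/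

import Mathlib

open MeasureTheory Matrix

/-- e^{iAt} for a complex square matrix A and real t. -/
noncomputable def eiA {n : ℕ} (A : Matrix (Fin n) (Fin n) ℂ) (t : ℝ) :
    Matrix (Fin n) (Fin n) ℂ :=
  NormedSpace.exp ((Complex.I * t) • A)



theorem eiA_genEig {n : ℕ} (A : Matrix (Fin n) (Fin n) ℂ) (μ : ℂ) (v : Fin n → ℂ) (k : ℕ)
    (hv : ((A - μ • (1 : Matrix (Fin n) (Fin n) ℂ)) ^ k) *ᵥ v = 0) (t : ℝ) :
    eiA A t *ᵥ v = Complex.exp (Complex.I * t * μ) •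
      ∑ j ∈ Finset.range k, ((Complex.I * t) ^ j * ((j.factorial : ℂ)⁻¹)) •
        (((A - μ • (1 : Matrix (Fin n) (Fin n) ℂ)) ^ j) *ᵥ v) := by
  set N := A - μ • (1 : Matrix (Fin n) (Fin n) ℂ) with hN
  have hzero : ∀ j, k ≤ j → (N ^ j) *ᵥ v = 0 := by
    intro j hj
    obtain ⟨m, rfl⟩ := Nat.exists_eq_add_of_le' hj
    rw [pow_add, ← Matrix.mulVec_mulVec, hv, Matrix.mulVec_zero]
  have hsplit : (Complex.I * t) • A
      = algebraMap ℂ (Matrix (Fin n) (Fin n) ℂ) (Complex.I * t * μ) + (Complex.I * t) • N := by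
    rw [hN, Algebra.algebraMap_eq_smul_one, smul_sub, smul_smul]; abel
  have hexp : eiA A t = Complex.exp (Complex.I * t * μ) • NormedSpace.exp ((Complex.I * t) • N) := by
    unfold eiA
    rw [hsplit, Matrix.exp_add_of_commute _ _ (Algebra.commute_algebraMap_left _ _)]
    let _ : NormedRing (Matrix (Fin n) (Fin n) ℂ) := Matrix.linftyOpNormedRing
    let _ : NormedAlgebra ℂ (Matrix (Fin n) (Fin n) ℂ) := Matrix.linftyOpNormedAlgebra
    have h := NormedSpace.algebraMap_exp_comm (𝕂 := ℂ) (𝔸 := Matrix (Fin n) (Fin n) ℂ)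
      (Complex.I * t * μ)
    have h2 : NormedSpace.exp (algebraMap ℂ (Matrix (Fin n) (Fin n) ℂ) (Complex.I * t * μ))
      = algebraMap ℂ (Matrix (Fin n) (Fin n) ℂ) (Complex.exp (Complex.I * t * μ)) := by
      rw [Complex.exp_eq_exp_ℂ]; exact h.symm
    rw [h2, Algebra.algebraMap_eq_smul_one, smul_mul_assoc, one_mul]
  rw [hexp, Matrix.smul_mulVec]
  congr 1
  have hs : HasSum (fun j : ℕ => ((j.factorial : ℂ)⁻¹) • ((Complex.I * t) • N) ^ j)
      (NormedSpace.exp ((Complex.I * t) • N)) := by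
    let _ : NormedRing (Matrix (Fin n) (Fin n) ℂ) := Matrix.linftyOpNormedRing
    let _ : NormedAlgebra ℂ (Matrix (Fin n) (Fin n) ℂ) := Matrix.linftyOpNormedAlgebra
    exact NormedSpace.exp_series_hasSum_exp' (𝕂 := ℂ) ((Complex.I * t) • N)
  have hs2 := hs.map (Matrix.mulVecBilin ℂ ℂ |>.flip v).toAddMonoidHom (by
    change Continuous fun P : Matrix (Fin n) (Fin n) ℂ => P *ᵥ v
    fun_prop)
  have hs3 : HasSum (fun j : ℕ => ((Complex.I * t) ^ j * ((j.factorial : ℂ)⁻¹)) • ((N ^ j) *ᵥ v))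
      (NormedSpace.exp ((Complex.I * t) • N) *ᵥ v) := by
    have hs2' : HasSum (fun j : ℕ => (((j.factorial : ℂ)⁻¹) • ((Complex.I * t) • N) ^ j) *ᵥ v)
      (NormedSpace.exp ((Complex.I * t) • N) *ᵥ v) := hs2
    convert hs2' using 2 with j
    change _ = (((j.factorial : ℂ)⁻¹) • ((Complex.I * t) • N) ^ j) *ᵥ v
    rw [smul_pow, smul_smul, Matrix.smul_mulVec, mul_comm]
  refine hs3.unique (hasSum_sum_of_ne_finset_zero ?_)
  intro j hj
  rw [hzero j (by simpa using hj), smul_zero]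

/-- exponential decay at infinity -/
def ExpDecay (f : ℝ → ℂ) : Prop :=
  ∃ b : ℝ, 0 < b ∧ f =O[Filter.atTop] fun t : ℝ => Real.exp (-b * t)

theorem ExpDecay.mono_exp {f : ℝ → ℂ} {b c : ℝ} (hcb : c ≤ b)
    (h : f =O[Filter.atTop] fun t : ℝ => Real.exp (-b * t)) :
    f =O[Filter.atTop] fun t : ℝ => Real.exp (-c * t) := by
  refine h.trans (Asymptotics.IsBigO.of_bound 1 ?_)
  filter_upwards [Filter.eventually_ge_atTop 0] with t ht
  rw [one_mul, Real.norm_eq_abs, Real.norm_eq_abs, Real.abs_exp, Real.abs_exp, Real.exp_le_exp]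
  nlinarith

theorem ExpDecay.add {f g : ℝ → ℂ} (hf : ExpDecay f) (hg : ExpDecay g) :
    ExpDecay (fun t => f t + g t) := by
  obtain ⟨b, hb, hf⟩ := hf
  obtain ⟨c, hc, hg⟩ := hg
  exact ⟨min b c, lt_min hb hc, (ExpDecay.mono_exp (min_le_left _ _) hf).add
    (ExpDecay.mono_exp (min_le_right _ _) hg)⟩

theorem ExpDecay.zero : ExpDecay (fun _ => 0) :=
  ⟨1, one_pos, Asymptotics.isBigO_zero _ _⟩

theorem ExpDecay.const_mul {f : ℝ → ℂ} (c : ℂ) (hf : ExpDecay f) :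
    ExpDecay (fun t => c * f t) := by
  obtain ⟨b, hb, hf⟩ := hf
  exact ⟨b, hb, hf.const_mul_left c⟩

theorem ExpDecay.mul {f g : ℝ → ℂ} (hf : ExpDecay f) (hg : ExpDecay g) :
    ExpDecay (fun t => f t * g t) := by
  obtain ⟨b, hb, hf⟩ := hf
  obtain ⟨c, hc, hg⟩ := hg
  refine ⟨b + c, add_pos hb hc, (hf.mul hg).congr_right fun t => ?_⟩
  rw [← Real.exp_add]; ring_nf

theorem ExpDecay.sum {ι : Type*} (s : Finset ι) {f : ι → ℝ → ℂ} (hf : ∀ i ∈ s, ExpDecay (f i)) :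
    ExpDecay (fun t => ∑ i ∈ s, f i t) := by
  classical
  induction s using Finset.induction_on with
  | empty => simpa using ExpDecay.zero
  | insert a s ha ih =>
    simp only [Finset.sum_insert ha]
    exact (hf a (by simp)).add (ih fun i hi => hf i (by simp [hi]))

theorem ExpDecay.base (μ : ℂ) (hμ : 0 < μ.im) (j : ℕ) :
    ExpDecay (fun t : ℝ => Complex.exp (Complex.I * t * μ) * (Complex.I * t) ^ j) := by
  refine ⟨μ.im / 2, by positivity, ?_⟩
  have h := (isLittleO_pow_exp_pos_mul_atTop j (half_pos hμ)).isBigO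
  have h2 := (Asymptotics.isBigO_refl (fun t : ℝ => Real.exp (-μ.im * t)) Filter.atTop).mul h
  refine (Asymptotics.IsBigO.of_norm_left (h2.norm_left.congr ?_ ?_))
  · intro t
    rw [norm_mul, norm_mul, Complex.norm_exp, norm_pow, norm_pow, norm_mul, Complex.norm_I]
    simp [mul_comm]
  · intro t
    rw [← Real.exp_add]; ring_nf

theorem eiA_mulVec_decay {n : ℕ} (A : Matrix (Fin n) (Fin n) ℂ)
    (hA : ∀ μ ∈ spectrum ℂ A, 0 < μ.im) (v : Fin n → ℂ) (i : Fin n) :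
    ExpDecay (fun t => (eiA A t *ᵥ v) i) := by
  let S : Submodule ℂ (Fin n → ℂ) :=
    { carrier := {v | ∀ i, ExpDecay (fun t => (eiA A t *ᵥ v) i)}
      add_mem' := by
        intro a b ha hb i
        simp only [Matrix.mulVec_add, Pi.add_apply]
        exact (ha i).add (hb i)
      zero_mem' := by
        intro i
        simpa using ExpDecay.zero
      smul_mem' := by
        intro c a ha i
        simp only [Matrix.mulVec_smul, Pi.smul_apply, smul_eq_mul]
        exact (ha i).const_mul c }
  suffices h : S = ⊤ by
    have : v ∈ S := h ▸ Submodule.mem_top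
    exact this i
  rw [eq_top_iff, ← Module.End.iSup_maxGenEigenspace_eq_top (Matrix.toLin' A)]
  refine iSup_le fun μ w hw => ?_
  rw [Module.End.mem_maxGenEigenspace] at hw
  obtain ⟨k, hk⟩ := hw
  have hk' : ((A - μ • (1 : Matrix (Fin n) (Fin n) ℂ)) ^ k) *ᵥ w = 0 := by
    rw [← hk, ← Matrix.toLin'_apply, Matrix.toLin'_pow, map_sub, map_smul, Matrix.toLin'_one]
    rfl
  by_cases hμ : μ ∈ spectrum ℂ A
  · intro i
    simp only [eiA_genEig A μ w k hk', Pi.smul_apply, Finset.sum_apply, smul_eq_mul,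
      Finset.mul_sum]
    refine ExpDecay.sum _ fun j _ => ?_
    convert (ExpDecay.base μ (hA μ hμ) j).const_mul
      (((j.factorial : ℂ)⁻¹) * (((A - μ • (1 : Matrix (Fin n) (Fin n) ℂ)) ^ j) *ᵥ w) i) using 2
    ring
  · rw [spectrum.notMem_iff, Algebra.algebraMap_eq_smul_one] at hμ
    have hu : IsUnit ((A - μ • (1 : Matrix (Fin n) (Fin n) ℂ)) ^ k) := by
      rw [← neg_sub]
      exact hμ.neg.pow k
    have : w = 0 := Matrix.mulVec_injective_of_isUnit hu (by simpa using hk')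
    rw [this]; exact S.zero_mem

theorem eiA_decay {n : ℕ} (A : Matrix (Fin n) (Fin n) ℂ)
    (hA : ∀ μ ∈ spectrum ℂ A, 0 < μ.im) (i j : Fin n) :
    ExpDecay (fun t => eiA A t i j) := by
  simpa using eiA_mulVec_decay A hA (Pi.single j 1) i

theorem eiA_continuous {n : ℕ} (A : Matrix (Fin n) (Fin n) ℂ) : Continuous (eiA A) := by
  unfold eiA
  have : Continuous (NormedSpace.exp : Matrix (Fin n) (Fin n) ℂ → _) := by
    let _ : NormedRing (Matrix (Fin n) (Fin n) ℂ) := Matrix.linftyOpNormedRing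
    let _ : NormedAlgebra ℂ (Matrix (Fin n) (Fin n) ℂ) := Matrix.linftyOpNormedAlgebra
    let _ : NormedAlgebra ℚ (Matrix (Fin n) (Fin n) ℂ) := NormedAlgebra.restrictScalars ℚ ℂ _
    exact NormedSpace.exp_continuous
  fun_prop

theorem eiA_add {n : ℕ} (A : Matrix (Fin n) (Fin n) ℂ) (s t : ℝ) :
    eiA A (s + t) = eiA A s * eiA A t := by
  unfold eiA
  rw [← Matrix.exp_add_of_commute _ _ (((Commute.refl A).smul_left _).smul_right _), ← add_smul]
  push_cast; ring_nf

theorem eiA_neg {n : ℕ} (A : Matrix (Fin n) (Fin n) ℂ) (t : ℝ) :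
    eiA A (-t) = eiA (-A) t := by
  unfold eiA
  simp

theorem eiA_comm {n : ℕ} (A : Matrix (Fin n) (Fin n) ℂ) (t : ℝ) :
    A * eiA A t = eiA A t * A := by
  unfold eiA
  exact (((Commute.refl A).smul_right _).exp_right).eq

theorem marchenko_entry_integrable {n m : ℕ}
    (A : Matrix (Fin n) (Fin n) ℂ) (hA : ∀ μ ∈ spectrum ℂ A, 0 < μ.im)
    (Ab : Matrix (Fin m) (Fin m) ℂ) (hAb : ∀ μ ∈ spectrum ℂ Ab, μ.im < 0)
    (B : Matrix (Fin n) (Fin 1) ℂ) (Cb : Matrix (Fin 1) (Fin m) ℂ) (i : Fin n) (j : Fin m) :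
    Integrable (fun z : ℝ => (eiA A z * B * Cb * eiA Ab (-z)) i j)
      (volume.restrict (Set.Ioi 0)) := by
  have hd : ExpDecay (fun z : ℝ => (eiA A z * B * Cb * eiA Ab (-z)) i j) := by
    simp only [Matrix.mul_apply (M := eiA A _ * B * Cb)]
    refine ExpDecay.sum _ fun k _ => ExpDecay.mul ?_ ?_
    · simp only [Matrix.mul_assoc (eiA A _), Matrix.mul_apply (M := eiA A _)]
      refine ExpDecay.sum _ fun l _ => ?_
      simpa only [mul_comm] using (eiA_decay A hA i l).const_mul ((B * Cb) l k)
    · simp only [eiA_neg]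
      refine eiA_decay (-Ab) ?_ k j
      intro μ hμ
      rw [← spectrum.neg_eq, Set.mem_neg] at hμ
      simpa using hAb _ hμ
  have hc : Continuous (fun z : ℝ => (eiA A z * B * Cb * eiA Ab (-z)) i j) := by
    have h1 := eiA_continuous A
    have h2 := eiA_continuous Ab
    have : Continuous (fun z : ℝ => (eiA A z * B * Cb * eiA Ab (-z))) :=
      ((h1.matrix_mul continuous_const).matrix_mul continuous_const).matrix_mul
        (h2.comp continuous_neg)
    exact this.matrix_elem i j
  obtain ⟨b, hb, hO⟩ := hd
  exact (integrable_norm_iff hc.aestronglyMeasurable).1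
    (integrable_of_isBigO_exp_neg hb hc.norm.continuousOn hO.norm_left)

/-- Theorem 5.1, auxiliary kernel K₂: the auxiliary Marchenko relation
K₂(x,y) = −i ∫_x^∞ K̄₂(x,z) Ω̄'(z+y) dz holds with the explicit value
K₂(x,y) = C e^{iAx} Γ(x)⁻¹ e^{iAx} M Ā e^{-iĀ(x+y)} B̄. -/
theorem marchenko_auxiliary_K2
    (𝒩 𝒩b : ℕ)
    (A : Matrix (Fin 𝒩) (Fin 𝒩) ℂ) (hA : ∀ μ ∈ spectrum ℂ A, 0 < μ.im)
    (B : Matrix (Fin 𝒩) (Fin 1) ℂ) (C : Matrix (Fin 1) (Fin 𝒩) ℂ)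
    (Ab : Matrix (Fin 𝒩b) (Fin 𝒩b) ℂ) (hAb : ∀ μ ∈ spectrum ℂ Ab, μ.im < 0)
    (Bb : Matrix (Fin 𝒩b) (Fin 1) ℂ) (Cb : Matrix (Fin 1) (Fin 𝒩b) ℂ)
    (M : Matrix (Fin 𝒩) (Fin 𝒩b) ℂ)
    (hM : ∀ i j, M i j = ∫ z in Set.Ioi (0 : ℝ), (eiA A z * B * Cb * eiA Ab (-z)) i j)
    (Mb : Matrix (Fin 𝒩b) (Fin 𝒩) ℂ)
    (hMb : ∀ i j, Mb i j = ∫ z in Set.Ioi (0 : ℝ), (eiA Ab (-z) * Bb * C * eiA A z) i j)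
    (x : ℝ)
    (Γ : Matrix (Fin 𝒩) (Fin 𝒩) ℂ)
    (hΓ : Γ = 1 - eiA A x * M * Ab * eiA Ab (-(2 * x)) * Mb * eiA A x)
    (hΓinv : IsUnit Γ)
    (Kb₂ : ℝ → ℂ)
    (hKb₂ : ∀ z : ℝ, x ≤ z →
      Kb₂ z = -((C * eiA A x * Γ⁻¹ * eiA A z * B) 0 0)) :
    ∀ y : ℝ, x < y →
      -Complex.I
          * (∫ z in Set.Ioi x, Kb₂ z * (-Complex.I * ((Cb * (Ab * eiA Ab (-(z + y))) * Bb) 0 0)))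
        = (C * eiA A x * Γ⁻¹ * eiA A x * M * (Ab * eiA Ab (-(x + y))) * Bb) 0 0 := by
  intro y _
  set P : Matrix (Fin 1) (Fin 𝒩) ℂ := C * eiA A x * Γ⁻¹ * eiA A x with hP
  set Q : Matrix (Fin 𝒩b) (Fin 1) ℂ := Ab * eiA Ab (-(x + y)) * Bb with hQ
  let F : ℝ → Matrix (Fin 𝒩) (Fin 𝒩b) ℂ := fun z => eiA A z * B * Cb * eiA Ab (-z)
  have key : ∀ z : ℝ, (P * F z * Q) 0 0
      = (C * eiA A x * Γ⁻¹ * eiA A (z + x) * B) 0 0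
        * ((Cb * (Ab * eiA Ab (-((z + x) + y))) * Bb) 0 0) := by
    intro z
    have e1 : eiA A (z + x) = eiA A x * eiA A z := by rw [add_comm, eiA_add]
    have e2 : Ab * eiA Ab (-((z + x) + y)) = eiA Ab (-z) * (Ab * eiA Ab (-(x + y))) := by
      rw [show -((z + x) + y) = -z + -(x + y) by ring, eiA_add, ← Matrix.mul_assoc, eiA_comm,
        Matrix.mul_assoc]
    have e3 : P * F z * Q = (C * eiA A x * Γ⁻¹ * eiA A (z + x) * B) *
        (Cb * (Ab * eiA Ab (-((z + x) + y))) * Bb) := by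
      rw [e1, e2, hP, hQ]
      simp only [F, Matrix.mul_assoc]
    rw [e3, Matrix.mul_apply]
    simp
  have h1 : (∫ z in Set.Ioi x, Kb₂ z * (-Complex.I * ((Cb * (Ab * eiA Ab (-(z + y))) * Bb) 0 0)))
      = ∫ z in Set.Ioi x, Complex.I * ((C * eiA A x * Γ⁻¹ * eiA A z * B) 0 0
        * ((Cb * (Ab * eiA Ab (-(z + y))) * Bb) 0 0)) := by
    refine setIntegral_congr_fun measurableSet_Ioi fun z hz => ?_
    simp only [hKb₂ z (le_of_lt hz)]
    ring
  have h2 : (∫ z in Set.Ioi x, (C * eiA A x * Γ⁻¹ * eiA A z * B) 0 0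
        * ((Cb * (Ab * eiA Ab (-(z + y))) * Bb) 0 0))
      = ∫ z in Set.Ioi (0 : ℝ), (P * F z * Q) 0 0 := by
    have h := (measurePreserving_add_right volume x).setIntegral_preimage_emb
      (measurableEmbedding_addRight x) (fun z : ℝ => (C * eiA A x * Γ⁻¹ * eiA A z * B) 0 0
        * ((Cb * (Ab * eiA Ab (-(z + y))) * Bb) 0 0)) (Set.Ioi x)
    rw [Set.preimage_add_const_Ioi, sub_self] at h
    rw [← h]
    simp only [key]
  have hint := marchenko_entry_integrable A hA Ab hAb B Cb
  have expand : ∀ N : Matrix (Fin 𝒩) (Fin 𝒩b) ℂ,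
      (P * N * Q) 0 0 = ∑ k, ∑ l, P 0 l * N l k * Q k 0 := by
    intro N
    rw [Matrix.mul_apply]
    simp only [Matrix.mul_apply (M := P), Finset.sum_mul]
  have h3 : (∫ z in Set.Ioi (0 : ℝ), (P * F z * Q) 0 0) = (P * M * Q) 0 0 := by
    simp only [expand]
    rw [integral_finsetSum _ fun k _ => integrable_finsetSum _ fun l _ =>
      ((hint l k).const_mul _).mul_const _]
    refine Finset.sum_congr rfl fun k _ => ?_
    rw [integral_finsetSum _ fun l _ => ((hint l k).const_mul _).mul_const _]
    refine Finset.sum_congr rfl fun l _ => ?_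
    rw [integral_mul_const, integral_const_mul, hM]
  rw [h1, integral_const_mul, h2, h3, ← mul_assoc, neg_mul, Complex.I_mul_I, neg_neg, one_mul, hQ]
  simp only [Matrix.mul_assoc]
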